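/- arXiv:2409.11346 — 8 statements merged into one kernel-verified Lean document; each statement's English description precedes it below -/
import Mathlib

section
/- Lifted optimality inequality for formulation (nPCA1): let (x, y, z) satisfy the constraints of (nPCA1), namely x : I × J × {1,…,H} → {0,1}, y : J × {1,…,H} → {0,1}, z : {1,…,H} → ℝ≥0 with Σ_{j} y_j^h = p^h, Σ_{j} x_{ij}^h = 1, x_{ij}^h ≤ y_j^h, Σ_{j} d_{ij} x_{ij}^h ≤ z^h and y_j^{h-1} ≤ y_j^h, and let h ∈ {1,…,H} and LB^h ≥ 0 be such that z^h ≥ LB^h. Then for every customer i ∈ I it holds that z^h ≥ Σ_{j∈J} max{LB^h, d_{ij}} x_{ij}^h. -/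
/-- Lifted optimality inequality for formulation (nPCA1). -/
theorem nPCA1_lifted_optimality
    {I J : Type} [Fintype I] [Fintype J] [Nonempty I] [Nonempty J]
    (d : I → J → ℝ) (hd : ∀ i j, 0 ≤ d i j)
    (H : ℕ) (hH : 1 ≤ H) (p : Fin H → ℕ)
    (x : I → J → Fin H → ℝ) (y : J → Fin H → ℝ) (z : Fin H → ℝ)
    (hx01 : ∀ i j h, x i j h = 0 ∨ x i j h = 1)
    (hy01 : ∀ j h, y j h = 0 ∨ y j h = 1)
    (hz0 : ∀ h, 0 ≤ z h)
    (hcard : ∀ h, ∑ j, y j h = (p h : ℝ))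
    (hassign : ∀ i h, ∑ j, x i j h = 1)
    (hopen : ∀ i j h, x i j h ≤ y j h)
    (hdist : ∀ i h, ∑ j, d i j * x i j h ≤ z h)
    (hnest : ∀ j (h : ℕ) (hh : h + 1 < H),
      y j ⟨h, Nat.lt_of_succ_lt hh⟩ ≤ y j ⟨h + 1, hh⟩)
    (h : Fin H) (LB : ℝ) (hLB0 : 0 ≤ LB) (hLBz : LB ≤ z h) :
    ∀ i, z h ≥ ∑ j, max LB (d i j) * x i j h := by
  intro i
  have key : ∀ j, max LB (d i j) * x i j h ≤ z h * x i j h := by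
    intro j
    rcases hx01 i j h with h0 | h1
    · simp [h0]
    · have hs : d i j * x i j h ≤ ∑ j, d i j * x i j h :=
        Finset.single_le_sum (f := fun j => d i j * x i j h)
          (fun k _ => mul_nonneg (hd i k) (by rcases hx01 i k h with e | e <;> simp [e]))
          (Finset.mem_univ j)
      have hz := hs.trans (hdist i h)
      rw [h1, mul_one] at hz
      rw [h1, mul_one, mul_one]
      exact max_le hLBz hz
  calc ∑ j, max LB (d i j) * x i j h ≤ ∑ j, z h * x i j h :=
        Finset.sum_le_sum (fun j _ => key j)
    _ = z h := by rw [← Finset.mul_sum, hassign, mul_one]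
end

section
/- Correctness of the distance constraints of formulation (nPCA2): let y : J → {0,1} have at least one j with y_j = 1, and let z ∈ ℝ. Then z satisfies z ≥ d_{ij} − Σ_{j' ∈ J : d_{ij'} < d_{ij}} (d_{ij} − d_{ij'}) y_{j'} for all i ∈ I and j ∈ J if and only if z ≥ max_{i ∈ I} min_{j ∈ J : y_j = 1} d_{ij}. -/
attribute [local instance] Classical.propDecidable

/-- Covering radius: `d(S) = max_{i ∈ I} min_{j ∈ S} d i j` (junk value 0 for `S = ∅`). -/
noncomputable def covRad {I J : Type} [Fintype I] [Fintype J] [Nonempty I]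
    (d : I → J → ℝ) (S : Finset J) : ℝ :=
  if h : S.Nonempty then
    Finset.univ.sup' Finset.univ_nonempty (fun i => S.inf' h (fun j => d i j))
  else 0

/-- Correctness of the distance constraints of formulation (nPCA2): the constraints
hold iff `z` is at least the covering radius of the set of open facilities. -/
theorem nPCA2_distance_constraints_correct
    {I J : Type} [Fintype I] [Fintype J] [Nonempty I] [Nonempty J]
    (d : I → J → ℝ) (hd : ∀ i j, 0 ≤ d i j)
    (y : J → ℝ) (hy01 : ∀ j, y j = 0 ∨ y j = 1) (hopen : ∃ j, y j = 1)
    (z : ℝ) :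
    (∀ i j, z ≥ d i j -
        ∑ j' ∈ Finset.univ.filter (fun j' => d i j' < d i j), (d i j - d i j') * y j') ↔
    z ≥ covRad d (Finset.univ.filter (fun j => y j = 1)) := by
  have hS : (Finset.univ.filter (fun j => y j = 1)).Nonempty := by
    obtain ⟨j, hj⟩ := hopen
    exact ⟨j, by simp [hj]⟩
  unfold covRad
  rw [dif_pos hS, ge_iff_le, Finset.sup'_le_iff]
  constructor
  · intro h i _
    obtain ⟨j, hj, he⟩ := Finset.exists_mem_eq_inf' hS (fun j => d i j)
    have h1 := h i j
    rw [Finset.sum_eq_zero] at h1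
    · rw [he]; linarith
    · intro j' hj'
      rcases hy01 j' with h0 | h0
      · rw [h0, mul_zero]
      · exfalso
        have h2 : (Finset.univ.filter (fun j => y j = 1)).inf' hS (fun j => d i j) ≤ d i j' :=
          Finset.inf'_le (fun j => d i j) (by simp [h0])
        rw [he] at h2
        have h3 := (Finset.mem_filter.mp hj').2
        linarith
  · intro h i j
    obtain ⟨k, hk, he⟩ := Finset.exists_mem_eq_inf' hS (fun j => d i j)
    have h1 := h i (Finset.mem_univ i)
    rw [he] at h1
    have hk1 : y k = 1 := (Finset.mem_filter.mp hk).2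
    have hnn : ∀ j' ∈ Finset.univ.filter (fun j' => d i j' < d i j),
        0 ≤ (d i j - d i j') * y j' := by
      intro j' hj'
      have h3 := (Finset.mem_filter.mp hj').2
      rcases hy01 j' with h0 | h0 <;> rw [h0] <;> linarith
    by_cases hlt : d i k < d i j
    · have h4 := Finset.single_le_sum hnn (Finset.mem_filter.mpr ⟨Finset.mem_univ k, hlt⟩)
      rw [hk1] at h4
      linarith
    · have h4 := Finset.sum_nonneg hnn
      linarith
end

section
/- Lifted optimality inequality for formulation (nPCA2): let y : J → {0,1} have at least one j with y_j = 1, let z ∈ ℝ satisfy z ≥ d_{ij} − Σ_{j' : d_{ij'} < d_{ij}} (d_{ij} − d_{ij'}) y_{j'} for all i ∈ I, j ∈ J, and let LB ≥ 0 be such that z ≥ LB. Then for all i ∈ I and j ∈ J it holds that z ≥ max{LB, d_{ij}} − Σ_{j' : d_{ij'} < d_{ij}} ( max{LB, d_{ij}} − max{LB, d_{ij'}} ) y_{j'}. -/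
attribute [local instance] Classical.propDecidable

/-- Lifted optimality inequality for formulation (nPCA2). -/
theorem nPCA2_lifted_optimality
    {I J : Type} [Fintype I] [Fintype J] [Nonempty I] [Nonempty J]
    (d : I → J → ℝ) (hd : ∀ i j, 0 ≤ d i j)
    (y : J → ℝ) (hy01 : ∀ j, y j = 0 ∨ y j = 1) (hopen : ∃ j, y j = 1)
    (z : ℝ)
    (hz : ∀ i j, z ≥ d i j -
        ∑ j' ∈ Finset.univ.filter (fun j' => d i j' < d i j), (d i j - d i j') * y j')
    (LB : ℝ) (hLB0 : 0 ≤ LB) (hLBz : LB ≤ z) :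
    ∀ i j, z ≥ max LB (d i j) -
        ∑ j' ∈ Finset.univ.filter (fun j' => d i j' < d i j),
          (max LB (d i j) - max LB (d i j')) * y j' := by
  intro i j
  obtain ⟨j0, hj0⟩ := hopen
  obtain ⟨k, hk, hmin⟩ := Finset.exists_min_image
    (Finset.univ.filter (fun j => y j = 1)) (fun j => d i j) ⟨j0, by simp [hj0]⟩
  have hyk : y k = 1 := by simpa using hk
  have hzk : d i k ≤ z := by
    have h := hz i k
    rw [Finset.sum_eq_zero] at h
    · linarith
    · intro a ha
      have ha' : d i a < d i k := by simpa using ha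
      rcases hy01 a with h0 | h1
      · simp [h0]
      · have := hmin a (by simp [h1])
        linarith
  have hmz : max LB (d i k) ≤ z := max_le hLBz hzk
  have hnn : ∀ a ∈ Finset.univ.filter (fun j' => d i j' < d i j),
      0 ≤ (max LB (d i j) - max LB (d i a)) * y a := by
    intro a ha
    have ha' : d i a < d i j := by simpa using ha
    have h1 : max LB (d i a) ≤ max LB (d i j) := max_le_max le_rfl ha'.le
    apply mul_nonneg (by linarith)
    rcases hy01 a with h | h <;> simp [h]
  by_cases hlt : d i k < d i j
  · have h := Finset.single_le_sum hnn (show k ∈ _ by simpa using hlt)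
    rw [hyk] at h
    linarith
  · have h := Finset.sum_nonneg hnn
    have h1 : max LB (d i j) ≤ max LB (d i k) := max_le_max le_rfl (not_lt.mp hlt)
    linarith
end

section
/- Variable fixing from an upper bound in formulation (nPCA3): let 0 ≤ D_0 ≤ D_1 ≤ … ≤ D_K be real numbers, let u : {1,…,K} → {0,1} be nonincreasing (u_k ≥ u_{k+1} for all k < K), and let z, UB ∈ ℝ satisfy D_0 + Σ_{k=1}^K (D_k − D_{k-1}) u_k ≤ z and z ≤ UB. Then u_k = 0 for every index k with D_k > UB. -/
/-- Variable fixing from an upper bound in formulation (nPCA3):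
indices `k ∈ {1,…,K}` with `D k > UB` have `u k = 0`. -/
theorem nPCA3_upper_bound_fixing
    (K : ℕ) (D : ℕ → ℝ) (hD0 : 0 ≤ D 0)
    (hDmono : ∀ k, k < K → D k ≤ D (k + 1))
    (u : ℕ → ℝ)
    (hu01 : ∀ k, 1 ≤ k → k ≤ K → u k = 0 ∨ u k = 1)
    (humono : ∀ k, 1 ≤ k → k < K → u (k + 1) ≤ u k)
    (z UB : ℝ)
    (hlink : D 0 + ∑ k ∈ Finset.Icc 1 K, (D k - D (k - 1)) * u k ≤ z)
    (hzUB : z ≤ UB) :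
    ∀ k, 1 ≤ k → k ≤ K → UB < D k → u k = 0 := by
  intro k hk1 hkK hUB
  rcases hu01 k hk1 hkK with h | h
  · exact h
  exfalso
  have hone : ∀ d, d < k → 1 ≤ u (k - d) := by
    intro d
    induction d with
    | zero => intro _; simp [h]
    | succ d ih =>
      intro hd
      have h1 := ih (by omega)
      have h2 := humono (k - (d + 1)) (by omega) (by omega)
      rw [show k - (d + 1) + 1 = k - d by omega] at h2
      linarith
  have key : ∀ n, n ≤ K →
      D (min n k) ≤ D 0 + ∑ j ∈ Finset.Icc 1 n, (D j - D (j - 1)) * u j := by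
    intro n
    induction n with
    | zero => intro _; simp
    | succ n ih =>
      intro hn
      have h1 := ih (by omega)
      have h2 := hDmono n (by omega)
      rw [Finset.sum_Icc_succ_top (by omega), Nat.add_sub_cancel]
      by_cases hc : n + 1 ≤ k
      · have h3 := hone (k - (n + 1)) (by omega)
        rw [show k - (k - (n + 1)) = n + 1 by omega] at h3
        rw [min_eq_left hc]
        rw [min_eq_left (by omega)] at h1
        nlinarith
      · rw [min_eq_right (by omega)]
        rw [min_eq_right (by omega)] at h1
        rcases hu01 (n + 1) (by omega) hn with h3 | h3 <;> rw [h3] <;> linarith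
  have h4 := key K le_rfl
  rw [min_eq_right hkK] at h4
  linarith
end

section
/- Variable fixing from a lower bound in formulation (nPCA3): let 0 ≤ D_0 ≤ D_1 ≤ … ≤ D_K be real numbers, let u : {1,…,K} → {0,1} be nonincreasing, and let z, LB ∈ ℝ satisfy D_0 + Σ_{k=1}^K (D_k − D_{k-1}) u_k ≤ z and z ≥ LB. Define u'_k = 1 if D_k < LB and u'_k = u_k otherwise, and let k' = min{k : D_k ≥ LB} (taking k' = K+1 if no such k exists, with D_{k'-1} = D_0 when k' = 1). Then u' is again nonincreasing, D_0 + Σ_{k=1}^K (D_k − D_{k-1}) u'_k = D_{k'-1} + Σ_{k=k'}^K (D_k − D_{k-1}) u_k, and D_0 + Σ_{k=1}^K (D_k − D_{k-1}) u'_k ≤ z. -/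
/-- Variable fixing from a lower bound in formulation (nPCA3): fixing `u k = 1` for all
`k` with `D k < LB` keeps the solution nonincreasing, rewrites the linking sum starting
from the critical index `k'`, and preserves feasibility of the linking constraint. -/
theorem nPCA3_lower_bound_fixing
    (K : ℕ) (D : ℕ → ℝ) (hD0 : 0 ≤ D 0)
    (hDmono : ∀ k, k < K → D k ≤ D (k + 1))
    (u : ℕ → ℝ)
    (hu01 : ∀ k, 1 ≤ k → k ≤ K → u k = 0 ∨ u k = 1)
    (humono : ∀ k, 1 ≤ k → k < K → u (k + 1) ≤ u k)
    (z LB : ℝ)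
    (hlink : D 0 + ∑ k ∈ Finset.Icc 1 K, (D k - D (k - 1)) * u k ≤ z)
    (hzLB : LB ≤ z)
    (k' : ℕ) (hk'1 : 1 ≤ k') (hk'le : k' ≤ K + 1)
    (hk'char : ∀ k, 1 ≤ k → k ≤ K → (LB ≤ D k ↔ k' ≤ k))
    (u' : ℕ → ℝ) (hu' : ∀ k, u' k = if D k < LB then 1 else u k) :
    (∀ k, 1 ≤ k → k < K → u' (k + 1) ≤ u' k) ∧
    D 0 + ∑ k ∈ Finset.Icc 1 K, (D k - D (k - 1)) * u' k
      = D (k' - 1) + ∑ k ∈ Finset.Icc k' K, (D k - D (k - 1)) * u k ∧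
    D 0 + ∑ k ∈ Finset.Icc 1 K, (D k - D (k - 1)) * u' k ≤ z := by
  have anti : ∀ i j, 1 ≤ i → i ≤ j → j ≤ K → u j ≤ u i := by
    intro i j hi hij
    induction j, hij using Nat.le_induction with
    | base => intro _; exact le_rfl
    | succ n hn ih =>
      intro h
      exact (humono n (by omega) (by omega)).trans (ih (by omega))
  have hlow : ∀ k, 1 ≤ k → k ≤ K → k < k' → u' k = 1 := by
    intro k h1 h2 h3
    have h : D k < LB := by
      by_contra hc
      have := (hk'char k h1 h2).1 (not_lt.1 hc)
      omega
    rw [hu', if_pos h]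
  have hhigh : ∀ k, 1 ≤ k → k ≤ K → k' ≤ k → u' k = u k := by
    intro k h1 h2 h3
    rw [hu', if_neg (not_lt.2 ((hk'char k h1 h2).2 h3))]
  have tele : ∀ m, 1 ≤ m → D 0 + ∑ k ∈ Finset.Ico 1 m, (D k - D (k - 1)) = D (m - 1) := by
    intro m hm
    induction m, hm using Nat.le_induction with
    | base => simp
    | succ n hn ih =>
      rw [Finset.sum_Ico_succ_top hn, ← add_assoc, ih]
      simp
  have hIcc : ∀ a, Finset.Icc a K = Finset.Ico a (K + 1) := by
    intro a; ext x; simp only [Finset.mem_Icc, Finset.mem_Ico]; omega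
  have heq : D 0 + ∑ k ∈ Finset.Icc 1 K, (D k - D (k - 1)) * u' k
      = D (k' - 1) + ∑ k ∈ Finset.Icc k' K, (D k - D (k - 1)) * u k := by
    rw [hIcc, hIcc, ← Finset.sum_Ico_consecutive _ hk'1 hk'le, ← add_assoc, ← tele k' hk'1]
    congr 1
    · congr 1
      refine Finset.sum_congr rfl fun k hk => ?_
      rw [Finset.mem_Ico] at hk
      rw [hlow k (by omega) (by omega) (by omega), mul_one]
    · refine Finset.sum_congr rfl fun k hk => ?_
      rw [Finset.mem_Ico] at hk
      rw [hhigh k (by omega) (by omega) (by omega)]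
  refine ⟨?_, heq, ?_⟩
  · intro k h1 h2
    rcases lt_or_ge k k' with h | h
    · rw [hlow k h1 h2.le h]
      rcases lt_or_ge (k + 1) k' with h' | h'
      · rw [hlow (k + 1) (by omega) (by omega) h']
      · rw [hhigh (k + 1) (by omega) (by omega) h']
        rcases hu01 (k + 1) (by omega) (by omega) with h3 | h3 <;> rw [h3] <;> norm_num
    · rw [hhigh k h1 h2.le h, hhigh (k + 1) (by omega) (by omega) (by omega)]
      exact humono k h1 h2
  · by_cases hc : k' = 1 ∨ (k' ≤ K ∧ u k' = 1)
    · have : ∀ k ∈ Finset.Icc 1 K, (D k - D (k - 1)) * u' k = (D k - D (k - 1)) * u k := by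
        intro k hk
        rw [Finset.mem_Icc] at hk
        rcases lt_or_ge k k' with h | h
        · rcases hc with hc | ⟨hc, hc1⟩
          · omega
          · have h4 := anti k k' hk.1 h.le hc
            rw [hlow k hk.1 hk.2 h]
            rcases hu01 k hk.1 hk.2 with h3 | h3
            · rw [h3, hc1] at h4; norm_num at h4
            · rw [h3]
        · rw [hhigh k hk.1 hk.2 h]
      rw [Finset.sum_congr rfl this]
      exact hlink
    · push Not at hc
      rw [heq, Finset.sum_eq_zero, add_zero]
      · have h : D (k' - 1) < LB := by
          by_contra h
          have := (hk'char (k' - 1) (by omega) (by omega)).1 (not_lt.1 h)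
          omega
        linarith
      · intro k hk
        rw [Finset.mem_Icc] at hk
        have h4 := anti k' k hk'1 hk.1 hk.2
        have h5 := (hu01 k' hk'1 (by omega)).resolve_right (hc.2 (by omega))
        rcases hu01 k (by omega) hk.2 with h3 | h3
        · rw [h3, mul_zero]
        · rw [h3, h5] at h4; norm_num at h4
end

section
/- Lifted optimality inequality for formulation (nPCR1): fix h ∈ {1,…,H}, let y : J → {0,1} satisfy Σ_{j∈J} y_j = p^h ≥ 1, let z ∈ ℝ satisfy z ≥ d_{ij} − Σ_{j' : d_{ij'} < d_{ij}} (d_{ij} − d_{ij'}) y_{j'} for all i ∈ I and j ∈ J, and let LB ≥ 0 satisfy LB ≤ d*(p^h) = min{ d(S) : S ⊆ J, |S| = p^h }. Then for all i ∈ I and j ∈ J it holds that z ≥ max{LB, d_{ij}} − Σ_{j' : d_{ij'} < d_{ij}} ( max{LB, d_{ij}} − max{LB, d_{ij'}} ) y_{j'}. -/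
attribute [local instance] Classical.propDecidable

/-- The p-center optimal value `d*(p) = min { d(S) : S ⊆ J, |S| = p }`. -/
noncomputable def pCenterOpt {I J : Type} [Fintype I] [Fintype J] [Nonempty I]
    (d : I → J → ℝ) (p : ℕ) : ℝ :=
  sInf { v : ℝ | ∃ S : Finset J, S.card = p ∧ v = covRad d S }

/-- Lifted optimality inequality for formulation (nPCR1), where the lower bound `LB`
is a lower bound on the p-center optimal value for the period's facility count. -/
theorem nPCR1_lifted_optimality
    {I J : Type} [Fintype I] [Fintype J] [Nonempty I] [Nonempty J]
    (d : I → J → ℝ) (hd : ∀ i j, 0 ≤ d i j)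
    (ph : ℕ) (hph1 : 1 ≤ ph) (hphcard : ph ≤ Fintype.card J)
    (y : J → ℝ) (hy01 : ∀ j, y j = 0 ∨ y j = 1)
    (hcard : ∑ j, y j = (ph : ℝ))
    (z : ℝ)
    (hz : ∀ i j, z ≥ d i j -
        ∑ j' ∈ Finset.univ.filter (fun j' => d i j' < d i j), (d i j - d i j') * y j')
    (LB : ℝ) (hLB0 : 0 ≤ LB) (hLBopt : LB ≤ pCenterOpt d ph) :
    ∀ i j, z ≥ max LB (d i j) -
        ∑ j' ∈ Finset.univ.filter (fun j' => d i j' < d i j),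
          (max LB (d i j) - max LB (d i j')) * y j' := by
  set S : Finset J := Finset.univ.filter (fun j => y j = 1) with hS
  have hmem : ∀ j, j ∈ S ↔ y j = 1 := by intro j; simp [hS]
  have hy : ∀ j, y j = if y j = 1 then 1 else 0 := by
    intro j
    rcases hy01 j with h | h <;> simp [h]
  have hScard : S.card = ph := by
    have h1 : ∑ j, y j = (S.card : ℝ) := by
      rw [Finset.sum_congr rfl (fun j _ => hy j), Finset.sum_boole]
    rw [h1] at hcard
    exact_mod_cast hcard
  have hne : S.Nonempty := Finset.card_pos.mp (by omega)
  have hmin : ∀ i, ∃ j0 ∈ S, (∀ j ∈ S, d i j0 ≤ d i j) ∧ d i j0 ≤ z := by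
    intro i
    obtain ⟨j0, hj0, hm⟩ := Finset.exists_min_image S (fun j => d i j) hne
    refine ⟨j0, hj0, hm, ?_⟩
    have h := hz i j0
    rw [Finset.sum_eq_zero] at h
    · linarith
    · intro j' hj'
      have hlt := (Finset.mem_filter.mp hj').2
      rcases hy01 j' with h0 | h1
      · simp [h0]
      · exact absurd (hm j' ((hmem j').2 h1)) (not_le.mpr hlt)
  have hLBz : LB ≤ z := by
    refine hLBopt.trans ?_
    have hb : BddBelow { v : ℝ | ∃ S : Finset J, S.card = ph ∧ v = covRad d S } := by
      refine Set.Finite.bddBelow ((Set.finite_range (covRad d)).subset ?_)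
      rintro v ⟨T, -, rfl⟩
      exact ⟨T, rfl⟩
    refine (csInf_le hb ⟨S, hScard, rfl⟩).trans ?_
    unfold covRad
    rw [dif_pos hne]
    refine Finset.sup'_le _ _ (fun i _ => ?_)
    obtain ⟨j0, hj0, -, hle⟩ := hmin i
    exact (Finset.inf'_le _ hj0).trans hle
  intro i j
  obtain ⟨j0, hj0, hm, hle⟩ := hmin i
  have hnn : ∀ j' ∈ Finset.univ.filter (fun j' => d i j' < d i j),
      0 ≤ (max LB (d i j) - max LB (d i j')) * y j' := by
    intro j' hj'
    have hlt := (Finset.mem_filter.mp hj').2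
    refine mul_nonneg (sub_nonneg.mpr (max_le_max le_rfl hlt.le)) ?_
    rcases hy01 j' with h | h <;> simp [h]
  by_cases hlt : d i j0 < d i j
  · have h1 := Finset.single_le_sum hnn (Finset.mem_filter.mpr ⟨Finset.mem_univ j0, hlt⟩)
    rw [(hmem j0).1 hj0] at h1
    have h2 : max LB (d i j0) ≤ z := max_le hLBz hle
    linarith
  · have h1 := Finset.sum_nonneg hnn
    have h2 : max LB (d i j) ≤ z := max_le hLBz ((not_lt.mp hlt).trans hle)
    linarith
end

section
/- Lifted optimality inequality for formulation (nPCR2): assume d^{h*} > 0 for all h, let y : J × {1,…,H} → {0,1} and w ∈ ℝ satisfy w ≥ (1/d^{h*}) ( d_{ij} − Σ_{j' : d_{ij'} < d_{ij}} (d_{ij} − d_{ij'}) y_{j'}^h ) − 1 for all i ∈ I, j ∈ J, h ∈ {1,…,H}, and let LB ≥ 0 be such that w ≥ LB. Then for all i ∈ I, j ∈ J, h ∈ {1,…,H}: w ≥ (1/d^{h*}) ( max{LB·d^{h*}, d_{ij}} − Σ_{j' : d_{ij'} < d_{ij}} ( max{LB·d^{h*}, d_{ij}} − max{LB·d^{h*},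 d_{ij'}} ) y_{j'}^h ) − 1. -/
attribute [local instance] Classical.propDecidable

/-- Lifted optimality inequality for formulation (nPCR2). -/
theorem nPCR2_lifted_optimality
    {I J : Type} [Fintype I] [Fintype J] [Nonempty I] [Nonempty J]
    (d : I → J → ℝ) (hd : ∀ i j, 0 ≤ d i j)
    (H : ℕ) (hH : 1 ≤ H) (p : Fin H → ℕ)
    (dstar : Fin H → ℝ) (hdstar : ∀ h, dstar h = pCenterOpt d (p h))
    (hpos : ∀ h, 0 < dstar h)
    (y : J → Fin H → ℝ) (hy01 : ∀ j h, y j h = 0 ∨ y j h = 1)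
    (w : ℝ)
    (hw : ∀ i j h, w ≥ (1 / dstar h) *
        (d i j - ∑ j' ∈ Finset.univ.filter (fun j' => d i j' < d i j),
          (d i j - d i j') * y j' h) - 1)
    (LB : ℝ) (hLB0 : 0 ≤ LB) (hLBw : LB ≤ w) :
    ∀ i j h, w ≥ (1 / dstar h) *
        (max (LB * dstar h) (d i j) -
          ∑ j' ∈ Finset.univ.filter (fun j' => d i j' < d i j),
            (max (LB * dstar h) (d i j) - max (LB * dstar h) (d i j')) * y j' h) - 1 := by
  intro i j h
  have hD := hpos h
  -- it suffices to clear the denominator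
  suffices hs : max (LB * dstar h) (d i j) -
          ∑ j' ∈ Finset.univ.filter (fun j' => d i j' < d i j),
            (max (LB * dstar h) (d i j) - max (LB * dstar h) (d i j')) * y j' h
            ≤ (w + 1) * dstar h by
    have h1 := (div_le_iff₀ hD).2 hs
    rw [ge_iff_le, one_div_mul_eq_div]
    linarith
  have hL : LB * dstar h ≤ (w + 1) * dstar h :=
    mul_le_mul_of_nonneg_right (by linarith) hD.le
  have hy0 : ∀ k, 0 ≤ y k h := fun k => by
    rcases hy01 k h with e | e <;> rw [e] <;> norm_num
  -- a site with no strictly closer open site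
  have key : ∀ k, (∀ k', d i k' < d i k → y k' h = 0) → d i k ≤ (w + 1) * dstar h := by
    intro k hk
    have h1 := hw i k h
    rw [Finset.sum_eq_zero, sub_zero, ge_iff_le, one_div_mul_eq_div] at h1
    · exact (div_le_iff₀ hD).1 (by linarith)
    · intro k' hk'
      rw [hk k' (Finset.mem_filter.1 hk').2, mul_zero]
  have hnn : ∀ k ∈ Finset.univ.filter (fun j' => d i j' < d i j),
      0 ≤ (max (LB * dstar h) (d i j) - max (LB * dstar h) (d i k)) * y k h := by
    intro k hk
    exact mul_nonneg (sub_nonneg.2 (max_le_max le_rfl (Finset.mem_filter.1 hk).2.le)) (hy0 k)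
  by_cases hc : ∀ k', d i k' < d i j → y k' h = 0
  · have := max_le hL (key j hc)
    have := Finset.sum_nonneg hnn
    linarith
  · push Not at hc
    obtain ⟨k0, hk0, hyk0⟩ := hc
    obtain ⟨k, hk, hmin⟩ := Finset.exists_min_image
      (Finset.univ.filter (fun k => d i k < d i j ∧ y k h ≠ 0)) (fun k => d i k)
      ⟨k0, Finset.mem_filter.2 ⟨Finset.mem_univ _, hk0, hyk0⟩⟩
    obtain ⟨-, hkj, hyk⟩ := Finset.mem_filter.1 hk
    have h1 : d i k ≤ (w + 1) * dstar h := by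
      apply key
      intro k' hk'
      by_contra hne
      exact absurd (hmin k' (Finset.mem_filter.2 ⟨Finset.mem_univ _, hk'.trans hkj, hne⟩))
        (not_le.2 hk')
    have h2 := Finset.single_le_sum hnn (Finset.mem_filter.2 ⟨Finset.mem_univ k, hkj⟩)
    rw [(hy01 k h).resolve_left hyk, mul_one] at h2
    have := max_le hL h1
    linarith
end

section
/- Critical facility yields the maximum violation: let d_1 ≤ d_2 ≤ … ≤ d_n be real numbers and let y_1, …, y_n ∈ [0,1] with Σ_{j=1}^n y_j ≥ 1. Define f(j) = d_j − Σ_{j'=1}^{j-1} (d_j − d_{j'}) y_{j'} for j = 1, …, n, and let j* be the smallest index with Σ_{j'=1}^{j*} y_{j'} ≥ 1. Then f(j) ≤ f(j*) for every j ∈ {1, …, n}. -/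
/-- Critical facility yields the maximum violation: with facilities `1, …, n` sorted by
nondecreasing distance, fractional `y ∈ [0,1]` of total mass at least `1`, and `j*` the
smallest index whose prefix sum of `y` reaches `1`, the candidate right-hand side
`f j = d j − Σ_{j' < j} (d j − d j') y j'` is maximized at `j = j*`. -/
theorem critical_facility_max_violation
    (n : ℕ) (d y : ℕ → ℝ)
    (hd : ∀ j j', 1 ≤ j → j ≤ j' → j' ≤ n → d j ≤ d j')
    (hy0 : ∀ j, 1 ≤ j → j ≤ n → 0 ≤ y j)
    (hy1 : ∀ j, 1 ≤ j → j ≤ n → y j ≤ 1)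
    (hsum : 1 ≤ ∑ j ∈ Finset.Icc 1 n, y j)
    (jstar : ℕ) (hj1 : 1 ≤ jstar) (hjn : jstar ≤ n)
    (hge : 1 ≤ ∑ j' ∈ Finset.Icc 1 jstar, y j')
    (hmin : ∀ m, m < jstar → ∑ j' ∈ Finset.Icc 1 m, y j' < 1) :
    ∀ j, 1 ≤ j → j ≤ n →
      d j - ∑ j' ∈ Finset.Icc 1 (j - 1), (d j - d j') * y j'
        ≤ d jstar - ∑ j' ∈ Finset.Icc 1 (jstar - 1), (d jstar - d j') * y j' := by
  have step : ∀ k, 1 ≤ k →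
      d (k+1) - ∑ j' ∈ Finset.Icc 1 (k + 1 - 1), (d (k+1) - d j') * y j'
        = d k - ∑ j' ∈ Finset.Icc 1 (k - 1), (d k - d j') * y j'
          + (d (k+1) - d k) * (1 - ∑ j' ∈ Finset.Icc 1 k, y j') := by
    intro k hk
    obtain ⟨m, rfl⟩ : ∃ m, k = m + 1 := ⟨k - 1, by omega⟩
    have h1 : ∑ j' ∈ Finset.Icc 1 (m+1), (d (m+1+1) - d j') * y j'
        = ∑ j' ∈ Finset.Icc 1 (m+1), (d (m+1) - d j') * y j'
          + (d (m+1+1) - d (m+1)) * ∑ j' ∈ Finset.Icc 1 (m+1), y j' := by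
      rw [Finset.mul_sum, ← Finset.sum_add_distrib]
      exact Finset.sum_congr rfl fun x _ => by ring
    have h2 : ∑ j' ∈ Finset.Icc 1 (m+1), (d (m+1) - d j') * y j'
        = ∑ j' ∈ Finset.Icc 1 m, (d (m+1) - d j') * y j' := by
      rw [Finset.sum_Icc_succ_top (by omega)]
      ring
    simp only [Nat.add_sub_cancel]
    rw [h1, h2]
    ring
  intro j h1 hn
  rcases le_total j jstar with h | h
  · clear hge
    induction jstar, h using Nat.le_induction with
    | base => exact le_rfl
    | succ k hk ih =>
      have := ih (by omega) (by omega) (fun m hm => hmin m (by omega))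
      rw [step k (by omega)]
      have a := hd k (k+1) (by omega) (by omega) hjn
      have b := hmin k (by omega)
      have := mul_nonneg (sub_nonneg.2 a) (sub_nonneg.2 b.le)
      linarith
  · induction j, h using Nat.le_induction with
    | base => exact le_rfl
    | succ k hk ih =>
      have := ih (by omega) (by omega)
      rw [step k (by omega)]
      have a := hd k (k+1) (by omega) (by omega) hn
      have b : ∑ j' ∈ Finset.Icc 1 jstar, y j' ≤ ∑ j' ∈ Finset.Icc 1 k, y j' := by
        apply Finset.sum_le_sum_of_subset_of_nonneg
        · exact Finset.Icc_subset_Icc_right hk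
        · intro i hi _
          rw [Finset.mem_Icc] at hi
          exact hy0 i hi.1 (by omega)
      have := mul_nonneg (sub_nonneg.2 a) (sub_nonneg.2 (hge.trans b))
      linarith
end
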